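/- (Corollary used in the paper: with λ1 = S_U − S_L, the equivalence holds for any λ2 ≥ 0.) Let d : ℕ and let S be a score function on binary adjacency matrices of size d with minimum value S* over acyclic binary adjacency matrices. Assume S_L ≤ S(A) for every binary adjacency matrix A, S* ≤ S_U, λ2 ≥ 0, and λ1 ≥ S_U − S_L with λ1 ≥ 0. Then every acyclic binary adjacency matrix A₀ with S(A₀) = S* minimizes the penalized objective F over all binary adjacency matrices, and the minimum of F over all binary adjacency matrices equals S*. -/

import Mathlib

/-- A binary adjacency matrix: every entry is 0 or 1. -/
def IsBinary {d : ℕ} (A : Matrix (Fin d) (Fin d) ℝ) : Prop :=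
  ∀ i j, A i j = 0 ∨ A i j = 1

/-- The directed graph induced by `A` (edge `i → j` iff `A i j = 1`) is acyclic. -/
def IsAcyclicMat {d : ℕ} (A : Matrix (Fin d) (Fin d) ℝ) : Prop :=
  Irreflexive (Relation.TransGen (fun i j => A i j = 1))

/-- The smooth acyclicity function `h(A) = trace (exp A) - d`. -/
noncomputable def hAcyc {d : ℕ} (A : Matrix (Fin d) (Fin d) ℝ) : ℝ :=
  Matrix.trace (NormedSpace.exp A) - d

open Classical in
/-- The penalized objective `F(A) = S(A) + λ₁·1[A ∉ DAGs] + λ₂·h(A)`. -/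
noncomputable def penObj {d : ℕ} (S : Matrix (Fin d) (Fin d) ℝ → ℝ) (lam1 lam2 : ℝ)
    (A : Matrix (Fin d) (Fin d) ℝ) : ℝ :=
  S A + lam1 * (if IsAcyclicMat A then (0 : ℝ) else 1) + lam2 * hAcyc A

/-!
Since `trace (exp A) = ∑ k, trace (A ^ k) / k!` and `trace (A ^ k)` counts the closed walks of
length `k`, the function `h` is nonnegative on binary matrices and vanishes on DAGs. Hence `F = S`
on DAGs, while off the DAGs `F ≥ S + λ₁ ≥ S_L + (S_U - S_L) = S_U ≥ S*`.
-/

section TraceExp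

open scoped Nat

variable {n : Type*} [Fintype n] [DecidableEq n]

theorem transGen_ne_zero_of_pow_succ_apply_ne_zero {R : Type*} [Semiring R] {A : Matrix n n R}
    {k : ℕ} {i j : n} (h : (A ^ (k + 1)) i j ≠ 0) :
    Relation.TransGen (fun i j => A i j ≠ 0) i j := by
  induction k generalizing j with
  | zero => exact .single (by simpa using h)
  | succ k ih =>
    rw [pow_succ, Matrix.mul_apply] at h
    obtain ⟨l, -, hl⟩ := Finset.exists_ne_zero_of_sum_ne_zero h
    exact (ih (left_ne_zero_of_mul hl)).tail (right_ne_zero_of_mul hl)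

theorem trace_pow_eq_zero_of_forall_not_transGen {R : Type*} [Semiring R] {A : Matrix n n R}
    (hA : ∀ i, ¬ Relation.TransGen (fun i j => A i j ≠ 0) i i) {k : ℕ} (hk : k ≠ 0) :
    (A ^ k).trace = 0 := by
  obtain ⟨m, rfl⟩ := Nat.exists_eq_succ_of_ne_zero hk
  refine Finset.sum_eq_zero fun i _ => ?_
  by_contra hi
  exact hA i (transGen_ne_zero_of_pow_succ_apply_ne_zero hi)

section NormedRing

variable {𝔸 : Type*} [NormedRing 𝔸] [NormedAlgebra ℚ 𝔸] [CompleteSpace 𝔸]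

theorem matrix_hasSum_exp (A : Matrix n n 𝔸) :
    HasSum (fun k : ℕ => (k !⁻¹ : ℚ) • A ^ k) (NormedSpace.exp A) := by
  open scoped Matrix.Norms.Operator in
  -- Instance search does not see that the norm uniformity is the product one.
  have : @CompleteSpace (Matrix n n 𝔸) PseudoMetricSpace.toUniformSpace :=
    inferInstanceAs (CompleteSpace (n → n → 𝔸))
  exact NormedSpace.exp_series_hasSum_exp' A

theorem hasSum_trace_exp (A : Matrix n n 𝔸) :
    HasSum (fun k : ℕ => (k !⁻¹ : ℚ) • (A ^ k).trace) (NormedSpace.exp A).trace := by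
  simpa only [Function.comp_def, Matrix.traceAddMonoidHom_apply, Matrix.trace_smul] using
    (matrix_hasSum_exp A).map (Matrix.traceAddMonoidHom n 𝔸) continuous_id.matrix_trace

theorem trace_exp_eq_card_of_forall_not_transGen {A : Matrix n n 𝔸}
    (hA : ∀ i, ¬ Relation.TransGen (fun i j => A i j ≠ 0) i i) :
    (NormedSpace.exp A).trace = Fintype.card n := by
  have h := hasSum_single (f := fun k : ℕ => (k !⁻¹ : ℚ) • (A ^ k).trace) 0 fun k hk => by
    rw [trace_pow_eq_zero_of_forall_not_transGen hA hk, smul_zero]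
  simpa using (hasSum_trace_exp A).unique h

end NormedRing

theorem card_le_trace_exp_of_nonneg {A : Matrix n n ℝ} (hA : ∀ i j, 0 ≤ A i j) :
    (Fintype.card n : ℝ) ≤ (NormedSpace.exp A).trace := by
  have h := le_hasSum (hasSum_trace_exp A) 0 fun k _ =>
    smul_nonneg (by positivity) (Finset.sum_nonneg fun i _ => Matrix.pow_apply_nonneg hA k i i)
  simpa using h

end TraceExp

section PenalizedObjective

variable {d : ℕ} {A : Matrix (Fin d) (Fin d) ℝ}

theorem IsBinary.apply_nonneg (hA : IsBinary A) (i j : Fin d) : 0 ≤ A i j := by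
  rcases hA i j with h | h <;> simp [h]

theorem IsBinary.apply_ne_zero_iff (hA : IsBinary A) (i j : Fin d) : A i j ≠ 0 ↔ A i j = 1 := by
  rcases hA i j with h | h <;> simp [h]

theorem hAcyc_nonneg (hA : IsBinary A) : 0 ≤ hAcyc A := by
  simpa [hAcyc] using card_le_trace_exp_of_nonneg hA.apply_nonneg

theorem hAcyc_eq_zero (hA : IsBinary A) (hdag : IsAcyclicMat A) : hAcyc A = 0 := by
  have hsupp : ∀ i, ¬ Relation.TransGen (fun i j => A i j ≠ 0) i i := by
    simp only [hA.apply_ne_zero_iff]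
    exact hdag
  simp [hAcyc, trace_exp_eq_card_of_forall_not_transGen hsupp]

variable {S : Matrix (Fin d) (Fin d) ℝ → ℝ} {lam1 lam2 : ℝ}

theorem penObj_eq_of_isAcyclicMat (hA : IsBinary A) (hdag : IsAcyclicMat A) :
    penObj S lam1 lam2 A = S A := by
  simp [penObj, hdag, hAcyc_eq_zero hA hdag]

theorem add_le_penObj_of_not_isAcyclicMat (hA : IsBinary A) (hcyc : ¬ IsAcyclicMat A)
    (hl2 : 0 ≤ lam2) : S A + lam1 ≤ penObj S lam1 lam2 A := by
  simpa [penObj, hcyc] using mul_nonneg hl2 (hAcyc_nonneg hA)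

theorem le_penObj {c : ℝ} (hA : IsBinary A) (hl2 : 0 ≤ lam2)
    (hdag : IsAcyclicMat A → c ≤ S A) (hcyc : ¬ IsAcyclicMat A → c ≤ S A + lam1) :
    c ≤ penObj S lam1 lam2 A := by
  by_cases h : IsAcyclicMat A
  · exact (hdag h).trans_eq (penObj_eq_of_isAcyclicMat hA h).symm
  · exact (hcyc h).trans (add_le_penObj_of_not_isAcyclicMat hA h hl2)

end PenalizedObjective

theorem prop1_corollary (d : ℕ) (S : Matrix (Fin d) (Fin d) ℝ → ℝ)
    (Sstar SL SU lam1 lam2 : ℝ)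
    (hSstar : IsLeast {s : ℝ | ∃ A : Matrix (Fin d) (Fin d) ℝ,
        IsBinary A ∧ IsAcyclicMat A ∧ S A = s} Sstar)
    (hSL : ∀ A : Matrix (Fin d) (Fin d) ℝ, IsBinary A → SL ≤ S A)
    (hSU : Sstar ≤ SU)
    (hl2 : 0 ≤ lam2)
    (hl1 : 0 ≤ lam1)
    (hl1' : SU - SL ≤ lam1) :
    (∀ A₀ : Matrix (Fin d) (Fin d) ℝ, IsBinary A₀ → IsAcyclicMat A₀ → S A₀ = Sstar →
      ∀ A : Matrix (Fin d) (Fin d) ℝ, IsBinary A →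
        penObj S lam1 lam2 A₀ ≤ penObj S lam1 lam2 A) ∧
    IsLeast {v : ℝ | ∃ A : Matrix (Fin d) (Fin d) ℝ,
        IsBinary A ∧ penObj S lam1 lam2 A = v} Sstar := by
  have hlower : ∀ A : Matrix (Fin d) (Fin d) ℝ, IsBinary A → Sstar ≤ penObj S lam1 lam2 A :=
    fun A hA => le_penObj hA hl2 (fun hdag => hSstar.2 ⟨A, hA, hdag, rfl⟩)
      (fun _ => by linarith [hSL A hA])
  refine ⟨fun A₀ hA₀ hdag hS A hA => ?_, ?_, ?_⟩
  · rw [penObj_eq_of_isAcyclicMat hA₀ hdag, hS]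
    exact hlower A hA
  · obtain ⟨A, hA, hdag, hS⟩ := hSstar.1
    exact ⟨A, hA, (penObj_eq_of_isAcyclicMat hA hdag).trans hS⟩
  · rintro _ ⟨A, hA, rfl⟩
    exact hlower A hA
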